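/- For every a > 1 there exists C > 0 such that for all integers k ≥ 3: Σ_{n ≥ 3, n ≠ k} (1/|n − k|) · Σ_{j ≥ 3, j ≠ n} 1/( (log j)^{2a} · |n − j| ) ≤ C/(log k)^{2(a−1)}. In particular the left-hand side is bounded uniformly in k. -/

import Mathlib

/-!
Both sums apply the operator `(T f)(k) = ∑_{n ≥ 3, n ≠ k} f(n) / |n - k|`, and one application of
`T` costs one logarithm: `T (log⁻ᵇ) ≤ C log⁻⁽ᵇ⁻¹⁾` for `b > 1`. Applying this with `b = 2a` and
then with `b = 2a - 1` gives the theorem.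

To bound `T (log⁻ᵇ)` at `k`, split the sum over `n` into three ranges.
* If `n² ≤ k`, there are at most `√k` terms, each at most `2 / k`, and `2 / √k` is smaller than
  any power of `1 / log k`.
* If `k < n²` and `n ≤ 2k`, then `log n` is comparable to `log k`, and the kernel `1 / |n - k|`
  contributes a factor `O(log k)`.
* If `n > 2k`, then `|n - k|` is comparable to `n`, and `∑ 1 / (n logᵇ n)` is compared with the
  increments of `log¹⁻ᵇ`.
-/

open Finset Real

section LogBounds

lemma one_le_log_natCast {n : ℕ} (hn : 3 ≤ n) : 1 ≤ log n := by
  have hn' : (3 : ℝ) ≤ n := mod_cast hn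
  rw [le_log_iff_exp_le (by linarith)]
  linarith [exp_one_lt_d9]

lemma log_rpow_le_mul_sqrt {c x : ℝ} (hc : 0 < c) (hx : 1 ≤ x) :
    log x ^ c ≤ (2 * c) ^ c * √x := by
  have hx0 : 0 ≤ x := by linarith
  have hlog : log x ≤ 2 * c * x ^ (1 / (2 * c)) := by
    simpa [div_eq_mul_inv, mul_comm] using
      log_le_rpow_div hx0 (show 0 < 1 / (2 * c) by positivity)
  calc log x ^ c
      ≤ (2 * c * x ^ (1 / (2 * c))) ^ c := rpow_le_rpow (log_nonneg hx) hlog hc.le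
    _ = (2 * c) ^ c * √x := by
        rw [mul_rpow (by positivity) (by positivity), ← rpow_mul hx0, sqrt_eq_rpow]
        congr 2
        field_simp

lemma hasDerivAt_log_rpow (c : ℝ) {x : ℝ} (hx : 1 < x) :
    HasDerivAt (fun y ↦ log y ^ c) (x⁻¹ * c * log x ^ (c - 1)) x :=
  (hasDerivAt_log (by linarith)).rpow_const (Or.inl (log_pos hx).ne')

lemma inv_mul_log_rpow_le_sub {b x : ℝ} (hb : 1 < b) (hx : 1 < x) :
    ((x + 1) * log (x + 1) ^ b)⁻¹ ≤
      (b - 1)⁻¹ * (log x ^ (1 - b) - log (x + 1) ^ (1 - b)) := by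
  obtain ⟨c, ⟨hxc, hcx⟩, hslope⟩ := exists_hasDerivAt_eq_slope (fun y ↦ log y ^ (1 - b))
    (fun y ↦ y⁻¹ * (1 - b) * log y ^ (1 - b - 1)) (lt_add_one x)
    (fun y hy ↦ (hasDerivAt_log_rpow _ (hx.trans_le hy.1)).continuousAt.continuousWithinAt)
    (fun y hy ↦ hasDerivAt_log_rpow _ (hx.trans hy.1))
  have hb0 : b - 1 ≠ 0 := by linarith
  have hc0 : 0 < c := by linarith
  have hlogc : 0 < log c := log_pos (by linarith)
  have hincrement :
      log x ^ (1 - b) - log (x + 1) ^ (1 - b) = (b - 1) * (c * log c ^ b)⁻¹ := by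
    rw [show 1 - b - 1 = -b by ring, rpow_neg hlogc.le, add_sub_cancel_left, div_one] at hslope
    rw [mul_inv]
    linarith
  rw [hincrement, inv_mul_cancel_left₀ hb0]
  gcongr

end LogBounds

section PartialSums

variable {b : ℝ} {k : ℕ} {s : Finset ℕ}

lemma sum_inv_mul_log_rpow_le (hb : 1 < b) (hk : 2 ≤ k) (hs : ∀ n ∈ s, k < n) :
    ∑ n ∈ s, ((n : ℝ) * log n ^ b)⁻¹ ≤ (b - 1)⁻¹ * (log k ^ (b - 1))⁻¹ := by
  have hsub : s ⊆ Ioc k (k + s.sup id) := fun n hn ↦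
    mem_Ioc.2 ⟨hs n hn, (le_sup (f := id) hn).trans (Nat.le_add_left _ _)⟩
  have htelescope : ∀ M, k ≤ M → ∑ n ∈ Ioc k M, ((n : ℝ) * log n ^ b)⁻¹ ≤
      (b - 1)⁻¹ * (log k ^ (1 - b) - log M ^ (1 - b)) := by
    intro M hM
    induction M, hM using Nat.le_induction with
    | base => simp
    | succ M hM ih =>
      have hM1 : (1 : ℝ) < M := mod_cast (by omega : 1 < M)
      rw [sum_Ioc_succ_top hM]
      push_cast
      linarith [inv_mul_log_rpow_le_sub hb hM1]
  calc ∑ n ∈ s, ((n : ℝ) * log n ^ b)⁻¹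
      ≤ ∑ n ∈ Ioc k (k + s.sup id), ((n : ℝ) * log n ^ b)⁻¹ :=
        sum_le_sum_of_subset_of_nonneg hsub fun _ _ _ ↦ by positivity
    _ ≤ (b - 1)⁻¹ * (log k ^ (1 - b) - log ↑(k + s.sup id) ^ (1 - b)) :=
        htelescope _ (Nat.le_add_right _ _)
    _ ≤ (b - 1)⁻¹ * log k ^ (1 - b) := by
        have hb0 : 0 ≤ (b - 1)⁻¹ := inv_nonneg.2 (by linarith)
        exact mul_le_mul_of_nonneg_left (sub_le_self _ (by positivity)) hb0
    _ = (b - 1)⁻¹ * (log k ^ (b - 1))⁻¹ := by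
        rw [← rpow_neg (by positivity), neg_sub]

-- The term `n = k` is `0⁻¹ = 0`.
lemma sum_range_inv_abs_sub (k : ℕ) :
    ∑ n ∈ range (k + (k + 1)), |(n : ℝ) - k|⁻¹ = 2 * harmonic k := by
  have hleft : ∑ n ∈ range k, |(n : ℝ) - k|⁻¹ = harmonic k := by
    rw [← sum_range_reflect, harmonic]
    push_cast
    refine sum_congr rfl fun i hi ↦ ?_
    have hcast : ((k - 1 - i : ℕ) : ℝ) - k = -(i + 1) := by
      rw [Nat.sub_sub, Nat.cast_sub (by have := mem_range.1 hi; omega)]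
      push_cast
      ring
    rw [hcast, abs_neg, abs_of_nonneg (by positivity)]
  have hright : ∑ i ∈ range (k + 1), |((k + i : ℕ) : ℝ) - k|⁻¹ = harmonic k := by
    simp [sum_range_succ', harmonic]
  rw [sum_range_add, hleft, hright, two_mul]

lemma sum_inv_abs_sub_le (hs : ∀ n ∈ s, n ≤ 2 * k) :
    ∑ n ∈ s, |(n : ℝ) - k|⁻¹ ≤ 2 * (1 + log k) :=
  calc ∑ n ∈ s, |(n : ℝ) - k|⁻¹
      ≤ ∑ n ∈ range (k + (k + 1)), |(n : ℝ) - k|⁻¹ :=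
        sum_le_sum_of_subset_of_nonneg
          (fun n hn ↦ mem_range.2 (by have := hs n hn; omega)) fun _ _ _ ↦ by positivity
    _ = 2 * harmonic k := sum_range_inv_abs_sub k
    _ ≤ 2 * (1 + log k) := by gcongr; exact harmonic_le_one_add_log k

lemma sum_inv_abs_sub_mul_inv_log_rpow_le_of_sq_le (hb : 1 < b) (hk : 2 ≤ k)
    (hs : ∀ n ∈ s, 3 ≤ n ∧ n ^ 2 ≤ k) :
    ∑ n ∈ s, |(n : ℝ) - k|⁻¹ * (log n ^ b)⁻¹ ≤
      2 * (2 * (b - 1)) ^ (b - 1) / log k ^ (b - 1) := by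
  have hk' : (2 : ℝ) ≤ k := mod_cast hk
  have hlogk : 0 < log k := log_pos (by linarith)
  have hcard : (#s : ℝ) ≤ √k := by
    have hsub : s ⊆ Icc 1 k.sqrt := fun n hn ↦
      mem_Icc.2 ⟨by linarith [(hs n hn).1], Nat.le_sqrt'.2 (hs n hn).2⟩
    calc (#s : ℝ) ≤ k.sqrt := mod_cast (card_le_card hsub).trans_eq (by simp)
      _ ≤ √k := nat_sqrt_le_real_sqrt
  have hterm : ∀ n ∈ s, |(n : ℝ) - k|⁻¹ * (log n ^ b)⁻¹ ≤ 2 / k := by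
    intro n hn
    obtain ⟨hn3, hnk⟩ := hs n hn
    have hnk' : 2 * (n : ℝ) ≤ k := mod_cast (by nlinarith : 2 * n ≤ k)
    have hdist : (k : ℝ) / 2 ≤ |(n : ℝ) - k| := by
      rw [abs_sub_comm]
      linarith [le_abs_self ((k : ℝ) - n)]
    have hlog : 1 ≤ log n ^ b := one_le_rpow (one_le_log_natCast hn3) (by linarith)
    calc |(n : ℝ) - k|⁻¹ * (log n ^ b)⁻¹
        ≤ ((k : ℝ) / 2)⁻¹ * 1 := by gcongr; exact inv_le_one_of_one_le₀ hlog
      _ = 2 / k := by rw [mul_one, inv_div]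
  calc ∑ n ∈ s, |(n : ℝ) - k|⁻¹ * (log n ^ b)⁻¹
      ≤ #s * (2 / k) := by simpa using sum_le_card_nsmul s _ _ hterm
    _ ≤ √k * (2 / k) := by gcongr
    _ = 2 / √k := by rw [mul_div_left_comm, sqrt_div_self', mul_one_div]
    _ ≤ 2 * (2 * (b - 1)) ^ (b - 1) / log k ^ (b - 1) := by
        rw [div_le_div_iff₀ (by positivity) (by positivity), mul_assoc]
        gcongr
        exact log_rpow_le_mul_sqrt (by linarith) (by linarith)

lemma sum_inv_abs_sub_mul_inv_log_rpow_le_of_lt_sq (hb : 0 ≤ b) (hk : 3 ≤ k)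
    (hs : ∀ n ∈ s, k < n ^ 2 ∧ n ≤ 2 * k) :
    ∑ n ∈ s, |(n : ℝ) - k|⁻¹ * (log n ^ b)⁻¹ ≤ 4 * 2 ^ b / log k ^ (b - 1) := by
  have hlogk : 1 ≤ log k := one_le_log_natCast hk
  have hlog : ∀ n ∈ s, (log n ^ b)⁻¹ ≤ 2 ^ b / log k ^ b := by
    intro n hn
    have hkn : log k ≤ 2 * log n := by
      rw [← Nat.cast_ofNat (R := ℝ), ← log_pow]
      exact log_le_log (by positivity) (mod_cast (hs n hn).1.le)
    calc (log n ^ b)⁻¹ ≤ ((log k / 2) ^ b)⁻¹ := by gcongr; linarith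
      _ = 2 ^ b / log k ^ b := by rw [div_rpow (by positivity) (by positivity), inv_div]
  calc ∑ n ∈ s, |(n : ℝ) - k|⁻¹ * (log n ^ b)⁻¹
      ≤ ∑ n ∈ s, |(n : ℝ) - k|⁻¹ * (2 ^ b / log k ^ b) := by
        gcongr with n hn
        exact hlog n hn
    _ = (∑ n ∈ s, |(n : ℝ) - k|⁻¹) * (2 ^ b / log k ^ b) := (sum_mul ..).symm
    _ ≤ (4 * log k) * (2 ^ b / log k ^ b) := by
        gcongr
        linarith [sum_inv_abs_sub_le fun n hn ↦ (hs n hn).2]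
    _ = 4 * 2 ^ b / log k ^ (b - 1) := by
        rw [rpow_sub_one (by positivity)]
        field_simp

lemma sum_inv_abs_sub_mul_inv_log_rpow_le_of_two_mul_lt (hb : 1 < b) (hk : 2 ≤ k)
    (hs : ∀ n ∈ s, 2 * k < n) :
    ∑ n ∈ s, |(n : ℝ) - k|⁻¹ * (log n ^ b)⁻¹ ≤ 2 * (b - 1)⁻¹ / log k ^ (b - 1) := by
  have hdist : ∀ n ∈ s, |(n : ℝ) - k|⁻¹ ≤ 2 * (n : ℝ)⁻¹ := by
    intro n hn
    have hkn : 2 * (k : ℝ) < n := mod_cast hs n hn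
    have hn0 : (0 : ℝ) < n := by linarith [k.cast_nonneg (α := ℝ)]
    calc |(n : ℝ) - k|⁻¹ ≤ ((n : ℝ) / 2)⁻¹ := by
          gcongr
          linarith [le_abs_self ((n : ℝ) - k)]
      _ = 2 * (n : ℝ)⁻¹ := by rw [inv_div, div_eq_mul_inv]
  calc ∑ n ∈ s, |(n : ℝ) - k|⁻¹ * (log n ^ b)⁻¹
      ≤ ∑ n ∈ s, 2 * (n : ℝ)⁻¹ * (log n ^ b)⁻¹ := by
        gcongr with n hn
        exact hdist n hn
    _ = 2 * ∑ n ∈ s, ((n : ℝ) * log n ^ b)⁻¹ := by simp_rw [mul_sum, mul_inv, mul_assoc]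
    _ ≤ 2 * ((b - 1)⁻¹ * (log k ^ (b - 1))⁻¹) := by
        gcongr
        exact sum_inv_mul_log_rpow_le hb hk fun n hn ↦ by linarith [hs n hn]
    _ = 2 * (b - 1)⁻¹ / log k ^ (b - 1) := by rw [← mul_assoc, ← div_eq_mul_inv]

lemma exists_sum_inv_abs_sub_mul_inv_log_rpow_le (hb : 1 < b) :
    ∃ C > 0, ∀ k : ℕ, 3 ≤ k → ∀ s : Finset ℕ, (∀ n ∈ s, 3 ≤ n) →
      ∑ n ∈ s, |(n : ℝ) - k|⁻¹ * (log n ^ b)⁻¹ ≤ C / log k ^ (b - 1) := by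
  refine ⟨2 * (2 * (b - 1)) ^ (b - 1) + (4 * 2 ^ b + 2 * (b - 1)⁻¹),
    by have := sub_pos.2 hb; positivity, fun k hk s hs ↦ ?_⟩
  rw [← sum_filter_add_sum_filter_not s (fun n ↦ n ^ 2 ≤ k),
    ← sum_filter_add_sum_filter_not (s.filter fun n ↦ ¬n ^ 2 ≤ k) (fun n ↦ n ≤ 2 * k),
    add_div, add_div]
  gcongr
  · refine sum_inv_abs_sub_mul_inv_log_rpow_le_of_sq_le hb (by linarith) fun n hn ↦ ?_
    rw [mem_filter] at hn
    exact ⟨hs n hn.1, hn.2⟩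
  · refine sum_inv_abs_sub_mul_inv_log_rpow_le_of_lt_sq (by linarith) hk fun n hn ↦ ?_
    simp only [mem_filter, not_le] at hn
    exact ⟨hn.1.2, hn.2⟩
  · refine sum_inv_abs_sub_mul_inv_log_rpow_le_of_two_mul_lt hb (by linarith) fun n hn ↦ ?_
    simp only [mem_filter, not_le] at hn
    exact hn.2

end PartialSums

section AbsHilbert

/-- The `n`-th summand of `absHilbert f k`. -/
noncomputable def absHilbertTerm (f : ℕ → ℝ) (k n : ℕ) : ℝ :=
  if 3 ≤ n ∧ n ≠ k then |(n : ℝ) - k|⁻¹ * f n else 0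

/-- The discrete Hilbert transform with its kernel replaced by the absolute value `1 / |n - k|`,
acting on sequences indexed by `n ≥ 3`. As a `tsum`, it is `0` if the summands are not summable. -/
noncomputable def absHilbert (f : ℕ → ℝ) (k : ℕ) : ℝ :=
  ∑' n, absHilbertTerm f k n

variable {f g : ℕ → ℝ}

lemma absHilbertTerm_nonneg (hf : ∀ n, 3 ≤ n → 0 ≤ f n) (k n : ℕ) :
    0 ≤ absHilbertTerm f k n := by
  unfold absHilbertTerm
  split_ifs with h
  · exact mul_nonneg (by positivity) (hf n h.1)
  · exact le_rfl

lemma absHilbert_nonneg (hf : ∀ n, 3 ≤ n → 0 ≤ f n) (k : ℕ) : 0 ≤ absHilbert f k :=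
  tsum_nonneg (absHilbertTerm_nonneg hf k)

lemma absHilbert_le_mul_absHilbert {c : ℝ} {k : ℕ} (hf : ∀ n, 3 ≤ n → 0 ≤ f n)
    (hfg : ∀ n, 3 ≤ n → f n ≤ c * g n) (hg : Summable (absHilbertTerm g k)) :
    absHilbert f k ≤ c * absHilbert g k := by
  have hterm : ∀ n, absHilbertTerm f k n ≤ c * absHilbertTerm g k n := by
    intro n
    unfold absHilbertTerm
    split_ifs with h
    · rw [mul_left_comm]
      gcongr
      exact hfg n h.1
    · rw [mul_zero]
  have hcg := hg.mul_left c
  have hsf := hcg.of_nonneg_of_le (absHilbertTerm_nonneg hf k) hterm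
  exact (hsf.tsum_le_tsum hterm hcg).trans_eq tsum_mul_left

theorem exists_absHilbert_inv_log_rpow_le {b : ℝ} (hb : 1 < b) :
    ∃ C > 0, ∀ k : ℕ, 3 ≤ k →
      Summable (absHilbertTerm (fun n ↦ (log n ^ b)⁻¹) k) ∧
        absHilbert (fun n ↦ (log n ^ b)⁻¹) k ≤ C / log k ^ (b - 1) := by
  obtain ⟨C, hC, hsum⟩ := exists_sum_inv_abs_sub_mul_inv_log_rpow_le hb
  refine ⟨C, hC, fun k hk ↦ ?_⟩
  have hnonneg : ∀ n, 0 ≤ absHilbertTerm (fun n ↦ (log n ^ b)⁻¹) k n :=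
    absHilbertTerm_nonneg (fun _ _ ↦ by positivity) k
  have hpartial : ∀ s, ∑ n ∈ s, absHilbertTerm (fun n ↦ (log n ^ b)⁻¹) k n ≤
      C / log k ^ (b - 1) := by
    intro s
    simp only [absHilbertTerm]
    rw [← sum_filter]
    exact hsum k hk _ fun n hn ↦ (mem_filter.1 hn).2.1
  exact ⟨summable_of_sum_le hnonneg hpartial, tsum_le_of_sum_le' (by positivity) hpartial⟩

end AbsHilbert

theorem statement14 (a : ℝ) (ha : 1 < a) :
    ∃ C > (0 : ℝ), ∀ k : ℕ, 3 ≤ k →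
      (∑' n : ℕ, if 3 ≤ n ∧ n ≠ k then
          (1 / |(n : ℝ) - (k : ℝ)|) *
            ∑' j : ℕ, (if 3 ≤ j ∧ j ≠ n then
              1 / (Real.log j ^ (2 * a) * |(n : ℝ) - (j : ℝ)|) else 0)
        else 0)
        ≤ C / Real.log k ^ (2 * (a - 1)) := by
  obtain ⟨C₁, hC₁, hinner⟩ := exists_absHilbert_inv_log_rpow_le (b := 2 * a) (by linarith)
  obtain ⟨C₂, hC₂, houter⟩ := exists_absHilbert_inv_log_rpow_le (b := 2 * a - 1) (by linarith)
  refine ⟨C₁ * C₂, by positivity, fun k hk ↦ ?_⟩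
  obtain ⟨hsummable, hle⟩ := houter k hk
  calc _ = absHilbert (absHilbert fun j ↦ (log j ^ (2 * a))⁻¹) k := by
        simp only [absHilbert, absHilbertTerm, one_div, mul_inv_rev, abs_sub_comm]
    _ ≤ C₁ * absHilbert (fun n ↦ (log n ^ (2 * a - 1))⁻¹) k :=
        absHilbert_le_mul_absHilbert
          (fun n _ ↦ absHilbert_nonneg (fun _ _ ↦ by positivity) n)
          (fun n hn ↦ (hinner n hn).2) hsummable
    _ ≤ C₁ * (C₂ / log k ^ (2 * a - 1 - 1)) := by gcongr
    _ = C₁ * C₂ / log k ^ (2 * (a - 1)) := by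
        rw [mul_div_assoc, show 2 * a - 1 - 1 = 2 * (a - 1) by ring]
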